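/- arXiv:2009.11640 — 2 statements merged into one kernel-verified Lean document; each statement's English description precedes it below -/
import Mathlib

section
/- Let B be a finite set and let (B'_i)_{i ∈ ι} be a nonempty finite family of pairwise distinct subsets of B that form an antichain under inclusion, with 0 < |B'_i| < |B| for every i. Give each B'_i the simple basic belief assignment with weight a_i = |B'_i|/|B|, and let m be the Dempster combination of these simple BBAs over the frame B. Then for all indices i, j: |B'_i| = |B'_j| if and only if m(B'_i) = m(B'_j), and |B'_i| > |B'_j| if and only if m(B'_i) > m(B'_j); i.e., the order among the combined belief masses m(B'_i) respects the order among the cardinalities |B'_i|. -/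
open Finset

/-- The intersection `⋂_{i ∈ S} B'_i` taken within the frame `Θ`, with the convention
that the empty intersection (`S = ∅`) is the whole frame `Θ`. -/
def interS {α ι : Type*} [DecidableEq α] (Θ : Finset α) (B : ι → Finset α)
    (S : Finset ι) : Finset α :=
  Θ.filter (fun x => ∀ i ∈ S, x ∈ B i)

/-- The conjunctive weight `Π_{i ∈ S} a_i · Π_{i ∉ S} (1 − a_i)` of a subfamily `S` when
combining the simple BBAs with focal sets `B'_i` and weights `a_i`. -/
def weight {ι : Type*} [Fintype ι] [DecidableEq ι] (a : ι → ℝ) (S : Finset ι) : ℝ :=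
  (∏ i ∈ S, a i) * ∏ i ∈ Finset.univ \ S, (1 - a i)

/-- The total conflict `k` of the conjunctive combination of the simple BBAs with focal
sets `B'_i ⊆ Θ` and weights `a_i`: the total weight of the subfamilies with empty
intersection. -/
def totalConflict {α ι : Type*} [DecidableEq α] [Fintype ι] [DecidableEq ι]
    (Θ : Finset α) (B : ι → Finset α) (a : ι → ℝ) : ℝ :=
  ∑ S ∈ (Finset.univ : Finset ι).powerset,
    if interS Θ B S = ∅ then weight a S else 0

/-- The Dempster combination of the simple BBAs with focal sets `B'_i ⊆ Θ` and weights
`a_i`: `m(X) = (1−k)⁻¹ · Σ_{S : ⋂_{i ∈ S} B'_i = X} Π_{i ∈ S} a_i · Π_{i ∉ S} (1 − a_i)`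
for `X ≠ ∅`, and `m(∅) = 0`. -/
noncomputable def dempsterCombo {α ι : Type*} [DecidableEq α] [Fintype ι] [DecidableEq ι]
    (Θ : Finset α) (B : ι → Finset α) (a : ι → ℝ) (X : Finset α) : ℝ :=
  if X = ∅ then 0 else
    (1 - totalConflict Θ B a)⁻¹ *
      ∑ S ∈ (Finset.univ : Finset ι).powerset,
        if interS Θ B S = X then weight a S else 0

/-! The antichain condition makes `{i}` the only subfamily whose intersection is `B' i`, so
`m (B' i) = (1 - k)⁻¹ * weight a {i}`, which is `a i / (1 - a i)` times a factor independent of `i`.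
That factor is positive, and `x ↦ x / (1 - x)` is strictly increasing below `1`, so the masses are
ordered as the weights. -/

section Weight

variable {ι : Type*} [Fintype ι] {a : ι → ℝ}

theorem prod_one_sub_pos (ha : ∀ l, a l < 1) : 0 < ∏ l, (1 - a l) :=
  prod_pos fun l _ ↦ sub_pos.2 (ha l)

variable [DecidableEq ι]

theorem weight_empty (a : ι → ℝ) : weight a ∅ = ∏ l, (1 - a l) := by
  simp [weight]

theorem weight_singleton {i : ι} (hi : a i ≠ 1) :
    weight a {i} = (∏ l, (1 - a l)) * (a i / (1 - a i)) := by
  have hi' : 1 - a i ≠ 0 := sub_ne_zero.2 hi.symm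
  rw [weight, prod_singleton, sdiff_singleton_eq_erase,
    ← mul_prod_erase univ (fun l ↦ 1 - a l) (mem_univ i)]
  field_simp

theorem sum_weight (a : ι → ℝ) : ∑ S ∈ (univ : Finset ι).powerset, weight a S = 1 := by
  simp only [weight, ← prod_add, add_sub_cancel, prod_const_one]

theorem weight_nonneg (ha : ∀ l, a l ∈ Set.Icc 0 1) (S : Finset ι) : 0 ≤ weight a S :=
  mul_nonneg (prod_nonneg fun l _ ↦ (ha l).1) (prod_nonneg fun l _ ↦ sub_nonneg.2 (ha l).2)

end Weight

section OrderedField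

variable {K : Type*} [Field K] [LinearOrder K] [IsStrictOrderedRing K]

theorem strictMonoOn_div_one_sub : StrictMonoOn (fun x : K ↦ x / (1 - x)) (Set.Iio 1) := by
  intro x hx y hy hxy
  refine (div_lt_div_iff₀ (sub_pos.2 hx) (sub_pos.2 hy)).2 ?_
  linarith

theorem card_div_card_mem_Ico {α : Type*} {s t : Finset α} (h : s ⊂ t) :
    (#s / #t : K) ∈ Set.Ico 0 1 := by
  have hlt : (#s : K) < #t := mod_cast card_lt_card h
  exact ⟨by positivity, (div_lt_one (hlt.trans_le' (Nat.cast_nonneg _))).2 hlt⟩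

end OrderedField

section Combination

variable {α ι : Type*} [DecidableEq α] {B : Finset α} {B' : ι → Finset α}

theorem interS_empty (B : Finset α) (B' : ι → Finset α) : interS B B' ∅ = B := by
  simp [interS]

theorem interS_singleton {i : ι} (hi : B' i ⊆ B) : interS B B' {i} = B' i := by
  simpa [interS, filter_mem_eq_inter] using hi

theorem interS_subset {S : Finset ι} {k : ι} (hk : k ∈ S) : interS B B' S ⊆ B' k :=
  fun _ hx ↦ (mem_filter.1 hx).2 k hk

theorem interS_eq_iff_eq_singleton {i : ι} (hi : B' i ⊂ B)
    (hanti : ∀ k, i ≠ k → ¬ B' i ⊆ B' k) {S : Finset ι} :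
    interS B B' S = B' i ↔ S = {i} := by
  refine ⟨fun h ↦ eq_singleton_iff_nonempty_unique_mem.2 ⟨?_, fun k hk ↦ ?_⟩, ?_⟩
  · rw [nonempty_iff_ne_empty]
    rintro rfl
    exact hi.ne (h.symm.trans (interS_empty B B'))
  · by_contra hki
    exact hanti k (Ne.symm hki) (h ▸ interS_subset hk)
  · rintro rfl
    exact interS_singleton hi.subset

variable [Fintype ι] [DecidableEq ι] {a : ι → ℝ}

theorem totalConflict_lt_one (hB : B.Nonempty) (B' : ι → Finset α)
    (ha : ∀ l, a l ∈ Set.Ico 0 1) : totalConflict B B' a < 1 := by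
  have hnonneg (S : Finset ι) : 0 ≤ weight a S :=
    weight_nonneg (fun l ↦ Set.Ico_subset_Icc_self (ha l)) S
  have hempty : 0 < weight a ∅ := weight_empty a ▸ prod_one_sub_pos fun l ↦ (ha l).2
  rw [← sum_weight a, totalConflict]
  refine sum_lt_sum (fun S _ ↦ ?_) ⟨∅, empty_mem_powerset _, ?_⟩
  · split_ifs
    exacts [le_rfl, hnonneg S]
  · rwa [interS_empty, if_neg hB.ne_empty]

theorem dempsterCombo_eq_weight_singleton {i : ι} (hne : (B' i).Nonempty) (hi : B' i ⊂ B)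
    (hanti : ∀ k, i ≠ k → ¬ B' i ⊆ B' k) (a : ι → ℝ) :
    dempsterCombo B B' a (B' i) = (1 - totalConflict B B' a)⁻¹ * weight a {i} := by
  simp [dempsterCombo, hne.ne_empty, interS_eq_iff_eq_singleton hi hanti]

theorem dempsterCombo_mass_order_card_general (hne : ∀ l, (B' l).Nonempty) (hB' : ∀ l, B' l ⊂ B)
    (hanti : ∀ k l, k ≠ l → ¬ B' k ⊆ B' l) (ha : ∀ l, a l ∈ Set.Ico 0 1) (i j : ι) :
    (a i = a j ↔ dempsterCombo B B' a (B' i) = dempsterCombo B B' a (B' j)) ∧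
    (a i > a j ↔ dempsterCombo B B' a (B' i) > dempsterCombo B B' a (B' j)) := by
  have hlt (l : ι) : a l < 1 := (ha l).2
  have hconflict : 0 < (1 - totalConflict B B' a)⁻¹ :=
    inv_pos.2 (sub_pos.2 (totalConflict_lt_one ((hne i).mono (hB' i).subset) B' ha))
  have hscale : 0 < (1 - totalConflict B B' a)⁻¹ * ∏ l, (1 - a l) :=
    mul_pos hconflict (prod_one_sub_pos hlt)
  have hmass (l : ι) : dempsterCombo B B' a (B' l) =
      ((1 - totalConflict B B' a)⁻¹ * ∏ k, (1 - a k)) * (a l / (1 - a l)) := by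
    rw [dempsterCombo_eq_weight_singleton (hne l) (hB' l) (hanti l),
      weight_singleton (hlt l).ne, mul_assoc]
  rw [hmass i, hmass j, mul_right_inj' hscale.ne', gt_iff_lt, gt_iff_lt,
    mul_lt_mul_iff_right₀ hscale]
  exact ⟨(strictMonoOn_div_one_sub.eq_iff_eq (hlt i) (hlt j)).symm,
    (strictMonoOn_div_one_sub.lt_iff_lt (hlt j) (hlt i)).symm⟩

end Combination

/-- Let `(B'_i)` be pairwise distinct subsets of the finite frame `B` forming an
antichain under inclusion, with `0 < |B'_i| < |B|`, each carrying the simple BBA with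
weight `a_i = |B'_i|/|B|`, and let `m` be their Dempster combination. Then the order
among the combined masses `m(B'_i)` respects the order among the cardinalities:
`|B'_i| = |B'_j| ↔ m(B'_i) = m(B'_j)` and `|B'_i| > |B'_j| ↔ m(B'_i) > m(B'_j)`. -/
theorem dempsterCombo_mass_order_card
    {α ι : Type*} [DecidableEq α] [Fintype ι] [DecidableEq ι] [Nonempty ι]
    (B : Finset α) (B' : ι → Finset α) (hBsub : ∀ i, B' i ⊆ B)
    (hdistinct : ∀ i j, i ≠ j → B' i ≠ B' j)
    (hantichain : ∀ i j, i ≠ j → ¬ B' i ⊆ B' j)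
    (hcard : ∀ i, 0 < (B' i).card ∧ (B' i).card < B.card)
    (a : ι → ℝ) (ha : ∀ i, a i = ((B' i).card : ℝ) / (B.card : ℝ))
    (i j : ι) :
    ((B' i).card = (B' j).card ↔ dempsterCombo B B' a (B' i) = dempsterCombo B B' a (B' j)) ∧
    ((B' i).card > (B' j).card ↔ dempsterCombo B B' a (B' i) > dempsterCombo B B' a (B' j)) := by
  have hB : (0 : ℝ) < #B := mod_cast (hcard i).1.trans (hcard i).2
  have hss (l : ι) : B' l ⊂ B := (hBsub l).ssubset_of_ne (ne_of_apply_ne card (hcard l).2.ne)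
  have hweight (l : ι) : a l ∈ Set.Ico 0 1 := ha l ▸ card_div_card_mem_Ico (hss l)
  simpa only [ha i, ha j, div_left_inj' hB.ne', gt_iff_lt, div_lt_div_iff_of_pos_right hB,
    Nat.cast_inj, Nat.cast_lt] using dempsterCombo_mass_order_card_general
      (fun l ↦ card_pos.1 (hcard l).1) hss hantichain hweight i j
end

section
/- Let B be a finite set and let (B'_i)_{i ∈ ι} be a nonempty finite family of pairwise distinct nonempty proper subsets of B that are pairwise disjoint (B'_i ∩ B'_j = ∅ for all i ≠ j). Give each B'_i the simple basic belief assignment with some weight a_i ∈ (0,1) and let m be the Dempster combination over the frame B, with credibility function Bel. Then for every i ∈ ι, Bel(B'_i) = m(B'_i): when all pairwise intersections of the subbases are empty, the combined BBA has no focal element strictly inside any B'_i, so the credibility of each subbase equals its combined mass. -/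
open Finset

/-- The credibility (belief) function of a basic belief assignment `m`:
`Bel(A) = Σ_{X ⊆ A, X ≠ ∅} m(X)`. -/
noncomputable def credibility {α : Type*} [DecidableEq α] (m : Finset α → ℝ)
    (A : Finset α) : ℝ :=
  ∑ X ∈ A.powerset.filter (fun X => X ≠ ∅), m X

/-!
Every focal element of the combination is an intersection of sets `B'_j` within the frame. If each
`B'_j` either contains `A` or misses it, the same is true of every such intersection, so none of
them is nonempty and strictly inside `A`; hence `m A` is the only possibly nonzero term of `Bel A`.
For pairwise disjoint `B'_j`, each `A = B'_i` has this property.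
-/

section

variable {α ι : Type*} [DecidableEq α]

theorem mem_interS {Θ : Finset α} {B : ι → Finset α} {S : Finset ι} {x : α} :
    x ∈ interS Θ B S ↔ x ∈ Θ ∧ ∀ i ∈ S, x ∈ B i :=
  mem_filter

theorem subset_interS_iff {Θ A : Finset α} {B : ι → Finset α} {S : Finset ι} :
    A ⊆ interS Θ B S ↔ A ⊆ Θ ∧ ∀ i ∈ S, A ⊆ B i := by
  simp only [subset_iff, mem_interS]
  grind

theorem interS_subset_of_mem (Θ : Finset α) (B : ι → Finset α) {S : Finset ι} {i : ι}
    (hi : i ∈ S) : interS Θ B S ⊆ B i :=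
  (subset_interS_iff.1 Subset.rfl).2 i hi

theorem disjoint_interS_or_subset_interS {Θ A : Finset α} {B : ι → Finset α} {S : Finset ι}
    (hA : A ⊆ Θ) (hB : ∀ i ∈ S, Disjoint A (B i) ∨ A ⊆ B i) :
    Disjoint A (interS Θ B S) ∨ A ⊆ interS Θ B S := by
  by_cases h : ∃ i ∈ S, Disjoint A (B i)
  · obtain ⟨i, hi, hdisj⟩ := h
    exact .inl (hdisj.mono_right (interS_subset_of_mem Θ B hi))
  · push Not at h
    exact .inr (subset_interS_iff.2 ⟨hA, fun i hi => (hB i hi).resolve_left (h i hi)⟩)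

theorem credibility_eq_apply_of_forall_ssubset {m : Finset α → ℝ} {A : Finset α}
    (hempty : m ∅ = 0) (hm : ∀ X ⊂ A, m X = 0) : credibility m A = m A := by
  have hsum : credibility m A = ∑ X ∈ A.powerset, m X :=
    sum_filter_of_ne fun X _ hX hX₀ => hX (hX₀ ▸ hempty)
  rw [hsum]
  exact sum_eq_single_of_mem A (mem_powerset_self A) fun X hX hXA =>
    hm X ((mem_powerset.1 hX).ssubset_of_ne hXA)

variable [Fintype ι] [DecidableEq ι]

theorem dempsterCombo_empty (Θ : Finset α) (B : ι → Finset α) (a : ι → ℝ) :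
    dempsterCombo Θ B a ∅ = 0 :=
  if_pos rfl

theorem nonempty_of_dempsterCombo_ne_zero {Θ X : Finset α} {B : ι → Finset α} {a : ι → ℝ}
    (hX : dempsterCombo Θ B a X ≠ 0) : X.Nonempty := by
  rw [nonempty_iff_ne_empty]
  rintro rfl
  exact hX (dempsterCombo_empty Θ B a)

theorem exists_interS_eq_of_dempsterCombo_ne_zero {Θ X : Finset α} {B : ι → Finset α}
    {a : ι → ℝ} (hX : dempsterCombo Θ B a X ≠ 0) : ∃ S : Finset ι, interS Θ B S = X := by
  contrapose! hX
  simp [dempsterCombo, hX]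

theorem dempsterCombo_eq_zero_of_ssubset {Θ A X : Finset α} {B : ι → Finset α}
    (hA : A ⊆ Θ) (hB : ∀ i, Disjoint A (B i) ∨ A ⊆ B i) (a : ι → ℝ) (hX : X ⊂ A) :
    dempsterCombo Θ B a X = 0 := by
  by_contra hfocal
  have hXne : X.Nonempty := nonempty_of_dempsterCombo_ne_zero hfocal
  obtain ⟨S, rfl⟩ := exists_interS_eq_of_dempsterCombo_ne_zero hfocal
  rcases disjoint_interS_or_subset_interS (S := S) hA fun i _ => hB i with hdisj | hsub
  · exact hXne.ne_empty (hdisj.eq_bot_of_ge hX.subset)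
  · exact hX.not_subset hsub

theorem credibility_eq_mass_of_pairwise_disjoint_general {Θ A : Finset α} {B : ι → Finset α}
    (hA : A ⊆ Θ) (hB : ∀ i, Disjoint A (B i) ∨ A ⊆ B i) (a : ι → ℝ) :
    credibility (dempsterCombo Θ B a) A = dempsterCombo Θ B a A :=
  credibility_eq_apply_of_forall_ssubset (dempsterCombo_empty Θ B a) fun _ hX =>
    dempsterCombo_eq_zero_of_ssubset hA hB a hX

end

/-- If the nonempty proper focal sets `B'_i ⊊ B` are pairwise distinct and pairwise
disjoint, then the Dempster combination `m` of their simple BBAs has no focal element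
strictly inside any `B'_i`, so the credibility of each subbase equals its combined
mass: `Bel(B'_i) = m(B'_i)`. -/
theorem credibility_eq_mass_of_pairwise_disjoint
    {α ι : Type*} [DecidableEq α] [Fintype ι] [DecidableEq ι] [Nonempty ι]
    (B : Finset α) (B' : ι → Finset α)
    (hne : ∀ i, (B' i).Nonempty) (hproper : ∀ i, B' i ⊂ B)
    (hdistinct : ∀ i j, i ≠ j → B' i ≠ B' j)
    (hdisj : ∀ i j, i ≠ j → B' i ∩ B' j = ∅)
    (a : ι → ℝ) (ha : ∀ i, 0 < a i ∧ a i < 1) (i : ι) :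
    credibility (dempsterCombo B B' a) (B' i) = dempsterCombo B B' a (B' i) := by
  refine credibility_eq_mass_of_pairwise_disjoint_general (hproper i).subset (fun j => ?_) a
  exact (ne_or_eq i j).imp (disjoint_iff_inter_eq_empty.2 <| hdisj i j ·) (congrArg B' · |>.subset)
end
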